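/- For n ∈ ℕ, the number of disjoint Schröder n-families (n-tuples of Schröder-type paths P_i from (i,0) to (0,i) with pairwise disjoint supports) equals 2^(n(n-1)/2). -/

import Mathlib

/-- A Schröder-type path from `src` to `tgt`. -/
def IsSchroderPath (p : List (ℤ × ℤ)) (src tgt : ℤ × ℤ) : Prop :=
  p.head? = some src ∧ p.getLast? = some tgt ∧
    p.Chain' fun u v => v - u = (0, 1) ∨ v - u = (-1, 1) ∨ v - u = (-1, 0)

/-!
Peel the bottom row off a disjoint family with starting abscissas `a₀ ≤ a₁ ≤ ⋯`. The path `P₀` runs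
along the ground to the origin. The path `Pᵢ₊₁` leaves the ground at some `(x + 1, 0)` for some
`(x + ε, 1)` with `ε ∈ {0, 1}`, and disjointness on the ground means exactly `aᵢ ≤ x < aᵢ₊₁`. What
lies above the ground is again a disjoint family, with starting abscissas `xᵢ + εᵢ`, so the numbers
`N(a)` of disjoint families satisfy `N(a) = ∑ N(x + ε)`. By multilinearity of the determinant and
telescoping, `2 ^ (n choose 2) * det (aᵢ choose j)` satisfies the same recursion.
-/

namespace Schroder

/-- The relation "`v` may follow `u` in a Schröder-type path". -/
def Step (u v : ℤ × ℤ) : Prop := v - u = (0, 1) ∨ v - u = (-1, 1) ∨ v - u = (-1, 0)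

theorem step_iff {u v : ℤ × ℤ} :
    Step u v ↔ v.1 = u.1 ∧ v.2 = u.2 + 1 ∨ v.1 = u.1 - 1 ∧ v.2 = u.2 + 1 ∨
      v.1 = u.1 - 1 ∧ v.2 = u.2 := by
  simp only [Step, Prod.ext_iff, Prod.fst_sub, Prod.snd_sub]
  omega

/-- The unit upward translation. -/
def up (x : ℤ × ℤ) : ℤ × ℤ := (x.1, x.2 + 1)

theorem up_injective : Function.Injective up := fun x y h => by
  simpa [up, Prod.ext_iff] using h

theorem up_surjective : Function.Surjective up := fun x => ⟨(x.1, x.2 - 1), by simp [up]⟩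

end Schroder

open Schroder

namespace IsSchroderPath

variable {p q : List (ℤ × ℤ)} {s t u v : ℤ × ℤ}

theorem iff_isChain :
    IsSchroderPath p s t ↔ p.head? = some s ∧ p.getLast? = some t ∧ p.IsChain Step :=
  Iff.rfl

theorem singleton (s : ℤ × ℤ) : IsSchroderPath [s] s s := by
  simp [iff_isChain]

theorem append (hp : IsSchroderPath p s u) (huv : Step u v) (hq : IsSchroderPath q v t) :
    IsSchroderPath (p ++ q) s t := by
  rw [iff_isChain] at *
  simp [List.isChain_append, hp, hq, huv]

theorem eq_singleton_or_exists_cons (hp : IsSchroderPath p s t) :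
    p = [s] ∧ s = t ∨ ∃ v q, p = s :: q ∧ Step s v ∧ IsSchroderPath q v t := by
  rw [iff_isChain] at hp
  match p, hp with
  | [u], ⟨hs, ht, _⟩ => simp_all
  | u :: v :: q, ⟨hs, ht, hc⟩ =>
    obtain rfl : u = s := by simpa using hs
    rw [List.isChain_cons_cons] at hc
    exact Or.inr ⟨v, v :: q, rfl, hc.1, rfl, by rwa [List.getLast?_cons_cons] at ht, hc.2⟩

theorem start_mem (hp : IsSchroderPath p s t) : s ∈ p :=
  List.mem_of_mem_head? hp.1

theorem start_unique (hs : IsSchroderPath p s t) (hu : IsSchroderPath p u v) : s = u :=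
  Option.some_injective _ (hs.1.symm.trans hu.1)

theorem bounds (hp : IsSchroderPath p s t) : t.1 ≤ s.1 ∧ s.2 ≤ t.2 ∧ ∀ x ∈ p, s.2 ≤ x.2 := by
  induction p generalizing s with
  | nil => simp [IsSchroderPath] at hp
  | cons w q ih =>
    rcases hp.eq_singleton_or_exists_cons with ⟨hq, rfl⟩ | ⟨v, q', hq, hstep, hq'⟩
    · simp [hq]
    · obtain ⟨rfl, rfl⟩ := List.cons.inj hq
      obtain ⟨hfst, hsnd, hle⟩ := ih hq'
      rw [step_iff] at hstep
      refine ⟨by omega, by omega, List.forall_mem_cons.2 ⟨le_rfl, fun x hx => ?_⟩⟩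
      have := hle x hx
      omega

theorem map_up_iff : IsSchroderPath (p.map up) (up s) (up t) ↔ IsSchroderPath p s t := by
  have hstep : (fun u v => Step (up u) (up v)) = Step := by
    ext u v
    simp only [step_iff, up]
    omega
  simp [iff_isChain, List.isChain_map, hstep, up_injective.eq_iff]

theorem exists_map_up_eq (hp : IsSchroderPath p (up s) (up t)) :
    ∃ q, p = q.map up ∧ IsSchroderPath q s t := by
  obtain ⟨q, rfl⟩ := List.map_surjective_iff.2 up_surjective p
  exact ⟨q, rfl, map_up_iff.1 hp⟩

end IsSchroderPath

namespace Schroder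

variable {a b : ℕ} {p q q' : List (ℤ × ℤ)}

/-- The horizontal path along the ground from `(a, 0)` to `(b, 0)`; empty if `a < b`. -/
def groundRun (b a : ℕ) : List (ℤ × ℤ) :=
  (List.Ico b (a + 1)).reverse.map fun x : ℕ => ((x : ℤ), 0)

theorem mem_groundRun {x : ℤ × ℤ} :
    x ∈ groundRun b a ↔ x.2 = 0 ∧ b ≤ x.1 ∧ x.1 ≤ a := by
  simp only [groundRun, List.mem_map, List.mem_reverse, List.Ico.mem, Prod.ext_iff]
  constructor
  · rintro ⟨n, hn, hfst, hsnd⟩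
    omega
  · rintro ⟨hsnd, hb, ha⟩
    exact ⟨x.1.toNat, by omega, by omega, hsnd.symm⟩

theorem groundRun_self (a : ℕ) : groundRun a a = [((a : ℤ), 0)] := by
  simp [groundRun]

theorem groundRun_succ (h : b ≤ a + 1) :
    groundRun b (a + 1) = (((a + 1 : ℕ) : ℤ), 0) :: groundRun b a := by
  simp [groundRun, List.Ico.succ_top h]

theorem isSchroderPath_groundRun (h : b ≤ a) :
    IsSchroderPath (groundRun b a) (a, 0) (b, 0) := by
  induction a, h using Nat.le_induction with
  | base => exact groundRun_self b ▸ IsSchroderPath.singleton _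
  | succ a h ih =>
    rw [groundRun_succ (by omega)]
    exact (IsSchroderPath.singleton _).append (step_iff.2 (by simp)) ih

theorem eq_groundRun (hp : IsSchroderPath p (a, 0) (0, 0)) : p = groundRun 0 a := by
  induction a generalizing p with
  | zero =>
    rcases hp.eq_singleton_or_exists_cons with ⟨rfl, -⟩ | ⟨v, q, rfl, hstep, hq⟩
    · exact (groundRun_self 0).symm
    · have := hq.bounds
      simp only [step_iff, Nat.cast_zero] at hstep
      omega
  | succ a ih =>
    rcases hp.eq_singleton_or_exists_cons with ⟨-, h⟩ | ⟨v, q, rfl, hstep, hq⟩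
    · simp only [Prod.mk.injEq] at h
      omega
    · have := hq.bounds
      obtain rfl : v = ((a : ℤ), 0) := by
        simp only [step_iff, Prod.ext_iff] at hstep ⊢
        omega
      rw [ih hq, groundRun_succ (by omega)]

/-- The path that runs along the ground from `(a, 0)` to `(b, 0)` and then follows `q`, raised by
one unit. -/
def addGround (b a : ℕ) (q : List (ℤ × ℤ)) : List (ℤ × ℤ) := groundRun b a ++ q.map up

theorem addGround_succ (h : b ≤ a + 1) :
    addGround b (a + 1) q = (((a + 1 : ℕ) : ℤ), 0) :: addGround b a q := by
  simp only [addGround, groundRun_succ h, List.cons_append]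

theorem isSchroderPath_addGround {c k : ℤ} (hba : b ≤ a) (hbc : Step (b, 0) (c, 1))
    (hq : IsSchroderPath q (c, 0) (0, k)) : IsSchroderPath (addGround b a q) (a, 0) (0, k + 1) :=
  (isSchroderPath_groundRun hba).append hbc (IsSchroderPath.map_up_iff.2 hq)

theorem up_mem_addGround {x : ℤ × ℤ} (hx : x ∈ q) : up x ∈ addGround b a q :=
  List.mem_append_right _ (List.mem_map_of_mem hx)

theorem mem_addGround_zero_iff {x : ℤ} (hq : ∀ y ∈ q, 0 ≤ y.2) :
    (x, 0) ∈ addGround b a q ↔ b ≤ x ∧ x ≤ a := by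
  have hup : (x, 0) ∉ q.map up := by
    intro h
    obtain ⟨y, hy, hyx⟩ := List.mem_map.1 h
    have := hq y hy
    simp only [up, Prod.mk.injEq] at hyx
    omega
  simp [addGround, hup, mem_groundRun]

theorem addGround_inj {b' : ℕ} (hb : b ≤ a) (hb' : b' ≤ a) (hq : ∀ x ∈ q, 0 ≤ x.2)
    (hq' : ∀ x ∈ q', 0 ≤ x.2) (h : addGround b a q = addGround b' a q') : b = b' ∧ q = q' := by
  have hground (x : ℕ) : b ≤ x ∧ x ≤ a ↔ b' ≤ x ∧ x ≤ a := by
    have := mem_addGround_zero_iff (a := a) (b := b) (x := x) hq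
    rw [h, mem_addGround_zero_iff hq'] at this
    exact_mod_cast this.symm
  obtain rfl : b = b' := le_antisymm ((hground b').2 ⟨le_rfl, hb'⟩).1 ((hground b).1 ⟨le_rfl, hb⟩).1
  exact ⟨rfl, List.map_injective_iff.2 up_injective (List.append_cancel_left h)⟩

theorem disjoint_addGround {a' b' : ℕ} (hlt : a < b') (hq : ∀ x ∈ q, 0 ≤ x.2)
    (hq' : ∀ x ∈ q', 0 ≤ x.2) (hd : q.Disjoint q') :
    (addGround b a q).Disjoint (addGround b' a' q') := by
  rintro ⟨x, y⟩ h h'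
  by_cases hy : y = 0
  · subst hy
    rw [mem_addGround_zero_iff hq] at h
    rw [mem_addGround_zero_iff hq'] at h'
    omega
  · have raised {a b : ℕ} {q : List (ℤ × ℤ)} (h : (x, y) ∈ addGround b a q) :
        (x, y) ∈ q.map up := by
      simpa [addGround, mem_groundRun, hy] using h
    exact List.disjoint_map up_injective hd (raised h) (raised h')

theorem exists_eq_addGround {k : ℕ} (hab : a ≤ b) (hp : IsSchroderPath p (b, 0) (0, k + 1))
    (ha : ((a : ℤ), 0) ∉ p) :
    ∃ x ∈ Finset.Ico a b, ∃ ε ∈ Finset.range 2, ∃ q,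
      p = addGround (x + 1) b q ∧ IsSchroderPath q ((x + ε : ℕ), 0) (0, k) := by
  induction b, hab using Nat.le_induction generalizing p with
  | base => exact absurd hp.start_mem ha
  | succ b hab ih =>
    rcases hp.eq_singleton_or_exists_cons with ⟨-, h⟩ | ⟨v, q, rfl, hstep, hq⟩
    · simp only [Prod.mk.injEq] at h
      omega
    obtain rfl | ⟨ε, hε, rfl⟩ :
        v = ((b : ℤ), 0) ∨ ∃ ε ∈ Finset.range 2, v = up ((b + ε : ℕ), 0) := by
      rcases step_iff.1 hstep with h | h | h
      · exact Or.inr ⟨1, by simp, by ext <;> simp [h, up]⟩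
      · exact Or.inr ⟨0, by simp, by ext <;> simp [h, up]⟩
      · exact Or.inl (by ext <;> simp [h])
    · obtain ⟨x, hx, ε, hε, q', rfl, hq'⟩ := ih hq fun h => ha (List.mem_cons_of_mem _ h)
      rw [Finset.mem_Ico] at hx
      exact ⟨x, Finset.mem_Ico.2 (by omega), ε, hε, q', (addGround_succ (by omega)).symm, hq'⟩
    · obtain ⟨q', rfl, hq'⟩ := IsSchroderPath.exists_map_up_eq (t := (0, k)) hq
      refine ⟨b, by simp [hab], ε, hε, q', ?_, hq'⟩
      rw [addGround, groundRun_self, List.singleton_append]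

/-- A family of pairwise disjoint Schröder-type paths, the `i`-th one leading from `(a i, 0)` to
`(0, i)`. -/
def IsDisjointFamily {n : ℕ} (a : Fin n → ℕ) (P : Fin n → List (ℤ × ℤ)) : Prop :=
  (∀ i, IsSchroderPath (P i) (a i, 0) (0, (i : ℕ))) ∧
    Pairwise fun i j => (P i).Disjoint (P j)

section GroundRow

variable {m : ℕ} {a : Fin (m + 1) → ℕ} {r r' : Fin m → ℕ × ℕ} {Q Q' : Fin m → List (ℤ × ℤ)}

/-- The ways in which the paths `1, …, m` of a disjoint family can leave the ground: the pair
`(x, ε)` at `i` means that path `i + 1` leaves it at `(x + 1, 0)` for `(x + ε, 1)`. -/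
def crossings (a : Fin (m + 1) → ℕ) : Finset (Fin m → ℕ × ℕ) :=
  Fintype.piFinset fun i => Finset.Ico (a i.castSucc) (a i.succ) ×ˢ Finset.range 2

/-- The abscissas at which the paths `1, …, m` enter height `1`. -/
def entries (r : Fin m → ℕ × ℕ) (i : Fin m) : ℕ := (r i).1 + (r i).2

/-- The family obtained from `Q` by raising it by one unit and adding a ground row with starting
abscissas `a` and crossings `r`. -/
def addGroundRow (a : Fin (m + 1) → ℕ) (r : Fin m → ℕ × ℕ) (Q : Fin m → List (ℤ × ℤ)) :
    Fin (m + 1) → List (ℤ × ℤ) :=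
  Fin.cons (addGround 0 (a 0) []) fun i => addGround ((r i).1 + 1) (a i.succ) (Q i)

theorem mem_crossings :
    r ∈ crossings a ↔ ∀ i, (a i.castSucc ≤ (r i).1 ∧ (r i).1 < a i.succ) ∧ (r i).2 < 2 := by
  simp [crossings]

theorem monotone_entries (ha : Monotone a) (hr : r ∈ crossings a) : Monotone (entries r) := by
  rw [mem_crossings] at hr
  refine monotone_iff_forall_lt.2 fun i j hij => ?_
  have hle : a i.succ ≤ a j.castSucc := ha (Fin.succ_le_castSucc_iff.2 hij)
  have hi := hr i
  have hj := hr j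
  simp only [entries]
  omega

theorem IsDisjointFamily.snd_nonneg (hQ : IsDisjointFamily (entries r) Q) (i : Fin m) :
    ∀ x ∈ Q i, 0 ≤ x.2 :=
  (hQ.1 i).bounds.2.2

theorem IsDisjointFamily.addGroundRow (ha : Monotone a) (hr : r ∈ crossings a)
    (hQ : IsDisjointFamily (entries r) Q) : IsDisjointFamily a (Schroder.addGroundRow a r Q) := by
  rw [mem_crossings] at hr
  constructor
  · refine Fin.cases ?_ fun i => ?_
    · simpa [Schroder.addGroundRow, addGround] using isSchroderPath_groundRun (Nat.zero_le (a 0))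
    · have hstep : Step (((r i).1 + 1 : ℕ), 0) ((entries r i : ℕ), 1) := by
        have := (hr i).2
        simp only [step_iff, entries]
        omega
      simpa [Schroder.addGroundRow] using isSchroderPath_addGround (hr i).1.2 hstep (hQ.1 i)
  · have : Std.Symm fun i j =>
        (Schroder.addGroundRow a r Q i).Disjoint (Schroder.addGroundRow a r Q j) :=
      ⟨fun _ _ h => h.symm⟩
    refine Pairwise.of_lt fun i j hij => ?_
    obtain ⟨j, rfl⟩ := Fin.exists_succ_eq.2 (Fin.ne_zero_of_lt hij)
    have hlt : a i < (r j).1 + 1 :=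
      Nat.lt_succ_of_le ((ha (Fin.le_castSucc_iff.2 hij)).trans (hr j).1.1)
    induction i using Fin.cases with
    | zero => exact disjoint_addGround hlt (by simp) (hQ.snd_nonneg j) (by simp)
    | succ i =>
      have hne : i ≠ j := (Fin.succ_lt_succ_iff.1 hij).ne
      exact disjoint_addGround hlt (hQ.snd_nonneg i) (hQ.snd_nonneg j) (hQ.2 hne)

theorem addGroundRow_inj (hr : r ∈ crossings a) (hr' : r' ∈ crossings a)
    (hQ : IsDisjointFamily (entries r) Q) (hQ' : IsDisjointFamily (entries r') Q')
    (h : addGroundRow a r Q = addGroundRow a r' Q') : r = r' ∧ Q = Q' := by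
  rw [mem_crossings] at hr hr'
  have hrow (i : Fin m) : (r i).1 + 1 = (r' i).1 + 1 ∧ Q i = Q' i :=
    addGround_inj (hr i).1.2 (hr' i).1.2 (hQ.snd_nonneg i) (hQ'.snd_nonneg i) (congrFun h i.succ)
  obtain rfl : Q = Q' := funext fun i => (hrow i).2
  refine ⟨funext fun i => ?_, rfl⟩
  have hentry : entries r i = entries r' i := by
    simpa using (hQ.1 i).start_unique (hQ'.1 i)
  have := (hrow i).1
  simp only [entries] at hentry
  ext <;> omega

theorem exists_eq_addGroundRow {P : Fin (m + 1) → List (ℤ × ℤ)} (ha : Monotone a)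
    (hP : IsDisjointFamily a P) :
    ∃ r ∈ crossings a, ∃ Q, IsDisjointFamily (entries r) Q ∧ P = addGroundRow a r Q := by
  have hdecomp (i : Fin m) :=
    exists_eq_addGround (ha i.castSucc_le_succ) (by simpa using hP.1 i.succ)
      (hP.2 i.castSucc_lt_succ.ne (hP.1 i.castSucc).start_mem)
  choose x hx ε hε Q hPQ hQ using hdecomp
  refine ⟨fun i => (x i, ε i), ?_, Q, ⟨hQ, fun i j hij y hi hj => ?_⟩, ?_⟩
  · exact Fintype.mem_piFinset.2 fun i => Finset.mk_mem_product (hx i) (hε i)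
  · exact hP.2 ((Fin.succ_injective m).ne hij) (hPQ i ▸ up_mem_addGround hi)
      (hPQ j ▸ up_mem_addGround hj)
  · refine funext (Fin.cases ?_ hPQ)
    simpa [addGroundRow, addGround] using eq_groundRun (hP.1 0)

/-- Adding a ground row turns the disjoint families over all possible crossings into the disjoint
families starting at `a`; the inverse peels the row off. -/
noncomputable def addGroundRowEquiv (ha : Monotone a) :
    (Σ r : crossings a, {Q // IsDisjointFamily (entries r.1) Q}) ≃ {P // IsDisjointFamily a P} :=
  Equiv.ofBijective
    (fun X => ⟨addGroundRow a X.1 X.2, X.2.2.addGroundRow ha X.1.2⟩) <| by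
    constructor
    · rintro ⟨⟨r, hr⟩, Q, hQ⟩ ⟨⟨r', hr'⟩, Q', hQ'⟩ h
      obtain ⟨rfl, rfl⟩ := addGroundRow_inj hr hr' hQ hQ' (congrArg Subtype.val h)
      rfl
    · rintro ⟨P, hP⟩
      obtain ⟨r, hr, Q, hQ, rfl⟩ := exists_eq_addGroundRow ha hP
      exact ⟨⟨⟨r, hr⟩, Q, hQ⟩, rfl⟩

theorem card_isDisjointFamily_zero (a : Fin 0 → ℕ) : Nat.card {P // IsDisjointFamily a P} = 1 := by
  have : Nonempty {P // IsDisjointFamily a P} :=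
    ⟨⟨Fin.elim0, fun i => i.elim0, fun i => i.elim0⟩⟩
  exact Nat.card_unique

theorem finite_isDisjointFamily {n : ℕ} {a : Fin n → ℕ} (ha : Monotone a) :
    Finite {P // IsDisjointFamily a P} := by
  induction n with
  | zero => infer_instance
  | succ m ih =>
    have (r : crossings a) := ih (monotone_entries ha r.2)
    exact Finite.of_equiv _ (addGroundRowEquiv ha)

theorem card_isDisjointFamily_eq_sum_crossings (ha : Monotone a) :
    Nat.card {P // IsDisjointFamily a P} =
      ∑ r ∈ crossings a, Nat.card {Q // IsDisjointFamily (entries r) Q} := by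
  have (r : crossings a) := finite_isDisjointFamily (monotone_entries ha r.2)
  rw [← Nat.card_congr (addGroundRowEquiv ha), Nat.card_sigma]
  exact Finset.sum_coe_sort (crossings a) fun r => Nat.card {Q // IsDisjointFamily (entries r) Q}

end GroundRow

section Determinants

open Matrix

theorem sum_det_eq_det_sum {R n κ : Type*} [CommRing R] [Fintype n] [DecidableEq n]
    (s : n → Finset κ) (f : n → κ → n → R) :
    ∑ r ∈ Fintype.piFinset s, (of fun i => f i (r i)).det =
      (of fun i j => ∑ x ∈ s i, f i x j).det := by
  have h := (detRowAlternating (n := n) (R := R)).toMultilinearMap.map_sum_finset f s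
  refine h.symm.trans (congrArg det ?_)
  ext i j
  exact Finset.sum_apply j (s i) (f i)

theorem det_eq_mul_det_sub_of_col_zero_eq {R : Type*} [CommRing R] {m : ℕ}
    (M : Matrix (Fin (m + 1)) (Fin (m + 1)) R) (c : R) (hM : ∀ i, M i 0 = c) :
    M.det = c * (of fun i j : Fin m => M i.succ j.succ - M i.castSucc j.succ).det := by
  rw [det_eq_of_forall_row_eq_smul_add_pred (A := M)
    (B := of (Fin.cons (M 0) fun i j => M i.succ j - M i.castSucc j)) (fun _ => 1)
    (fun j => by simp) (fun i j => by simp), det_succ_column_zero, Fin.sum_univ_succ]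
  simp [hM, submatrix]

theorem det_mul_add_mul_pred {K : Type*} [Field K] {m : ℕ} {c : K} (hc : c ≠ 0) (d : K)
    (M : Matrix (Fin (m + 1)) (Fin (m + 1)) K) :
    (of fun i => Fin.cons (c * M i 0) fun j : Fin m => c * M i j.succ + d * M i j.castSucc).det =
      c ^ (m + 1) * M.det := by
  have hscale : (c • M).det = c ^ (m + 1) * M.det := by rw [det_smul, Fintype.card_fin]
  rw [← hscale]
  refine (det_eq_of_forall_col_eq_smul_add_pred (fun _ => -d / c) (fun i => by simp)
    fun i j => ?_).symm
  have hcancel : -d / c * (c * M i j.castSucc) = -(d * M i j.castSucc) := by field_simp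
  simp [hcancel]

theorem det_choose_self (n : ℕ) : (of fun i j : Fin n => ((i : ℕ).choose j : ℚ)).det = 1 := by
  rw [det_of_isLowerTriangular]
  · simp
  · intro i j hij
    simp [Nat.choose_eq_zero_of_lt (show (i : ℕ) < j from hij)]

theorem sum_choose_add_choose_succ {a b : ℕ} (hab : a ≤ b) (j : ℕ) :
    ∑ x ∈ Finset.Ico a b ×ˢ Finset.range 2, ((x.1 + x.2).choose j : ℚ) =
      (2 * b.choose (j + 1) + b.choose j) - (2 * a.choose (j + 1) + a.choose j) := by
  rw [Finset.sum_product,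
    ← Finset.sum_Ico_sub (fun x => (2 * x.choose (j + 1) + x.choose j : ℚ)) hab]
  refine Finset.sum_congr rfl fun x _ => ?_
  simp only [Finset.sum_range_succ, Finset.sum_range_zero, zero_add, add_zero,
    Nat.choose_succ_succ' x j]
  push_cast
  ring

theorem sum_crossings_det_choose {m : ℕ} {a : Fin (m + 1) → ℕ} (ha : Monotone a) :
    ∑ r ∈ crossings a, (of fun i j : Fin m => ((entries r i).choose j : ℚ)).det =
      2 ^ m * (of fun i j : Fin (m + 1) => ((a i).choose j : ℚ)).det := by
  let B : Matrix (Fin (m + 1)) (Fin (m + 1)) ℚ := of fun i =>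
    Fin.cons (2 * (a i).choose 0) fun j : Fin m => 2 * (a i).choose (j + 1) + 1 * (a i).choose j
  have hsum : ∑ r ∈ crossings a, (of fun i j : Fin m => ((entries r i).choose j : ℚ)).det =
      (of fun i j : Fin m => B i.succ j.succ - B i.castSucc j.succ).det := by
    refine (sum_det_eq_det_sum _
      fun _ (x : ℕ × ℕ) (j : Fin m) => ((x.1 + x.2).choose (j : ℕ) : ℚ)).trans ?_
    refine congrArg det (Matrix.ext fun i j => ?_)
    simpa [B] using sum_choose_add_choose_succ (ha i.castSucc_le_succ) j
  have hdiff : B.det = 2 * (of fun i j : Fin m => B i.succ j.succ - B i.castSucc j.succ).det :=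
    det_eq_mul_det_sub_of_col_zero_eq B 2 fun i => by simp [B]
  have hcol : B.det = 2 ^ (m + 1) * (of fun i j : Fin (m + 1) => ((a i).choose j : ℚ)).det :=
    det_mul_add_mul_pred two_ne_zero 1 (of fun i j : Fin (m + 1) => ((a i).choose j : ℚ))
  rw [hdiff, pow_succ', mul_assoc] at hcol
  exact hsum.trans (mul_left_cancel₀ two_ne_zero hcol)

end Determinants

end Schroder

theorem card_disjoint_families_general {n : ℕ} {a : Fin n → ℕ} (ha : Monotone a) :
    (Nat.card {P // IsDisjointFamily a P} : ℚ) =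
      2 ^ (n * (n - 1) / 2) * (Matrix.of fun i j : Fin n => ((a i).choose j : ℚ)).det := by
  rw [← Nat.choose_two_right]
  induction n with
  | zero => simp [card_isDisjointFamily_zero]
  | succ m ih =>
    rw [card_isDisjointFamily_eq_sum_crossings ha, Nat.cast_sum,
      Finset.sum_congr rfl fun r hr => ih (monotone_entries ha hr),
      ← Finset.mul_sum, sum_crossings_det_choose ha, ← mul_assoc, ← pow_add, add_comm,
      Nat.choose_succ_succ', Nat.choose_one_right]

theorem card_disjoint_families (n : ℕ) :
    Nat.card {P : Fin n → List (ℤ × ℤ) //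
        (∀ i : Fin n, IsSchroderPath (P i) ((i : ℤ), 0) (0, (i : ℤ))) ∧
        ∀ i j : Fin n, i ≠ j → ∀ x : ℤ × ℤ, x ∈ P i → x ∉ P j}
      = 2 ^ (n * (n - 1) / 2) := by
  have h := card_disjoint_families_general (a := fun i : Fin n => (i : ℕ)) fun _ _ hij => hij
  rw [det_choose_self, mul_one] at h
  exact_mod_cast h
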